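/- Let h be a permutation of a finite set X of size d with cycle type μ (including fixed points), and let i < j be positive integers. Then the number of transpositions τ of X such that the cycle type of τ∘h equals μ with one part equal to i+j removed and two parts equal to i and j added is exactly (i+j)·m_{i+j}(μ). -/

import Mathlib

open Finset Equiv

/-- The cycle type of a permutation including fixed points: the multiset of the sizes of
all cycles (orbits), where each fixed point contributes a part equal to `1`. -/
def cycleTypeFull {X : Type*} [Fintype X] [DecidableEq X] (h : Equiv.Perm X) : Multiset ℕ :=
  h.cycleType + Multiset.replicate (Finset.univ.filter fun x => h x = x).card 1

/-!
If `s` lies on a cycle of length `n` of `h` and `0 < k < n`, then `swap s (h^[k] s) * h` runs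
through `s, h s, …, h^[k - 1] s` and back to `s`, so that cycle is cut into cycles of lengths `k`
and `n - k`. A transposition of two points on different cycles joins their cycles instead and
lowers the number of parts. Hence the transpositions counted are the `swap s (h^[i] s)` with `s` on
a cycle of length `i + j`. There are `(i + j) * m_{i+j}` such points `s`, and two distinct ones give
the same transposition exactly when each is the image of the other under `h^[i]`, which forces
`i = j`.
-/

open Function (minimalPeriod IsPeriodicPt IsFixedPt)

section Multiset

variable {α : Type*}

theorem eq_of_forall_mul_count_eq {μ ν : Multiset ℕ} (hμ : 0 ∉ μ) (hν : 0 ∉ ν)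
    (hμν : ∀ n, n * μ.count n = n * ν.count n) : μ = ν := by
  ext n
  obtain rfl | hn := n.eq_zero_or_pos
  · rw [Multiset.count_eq_zero_of_notMem hμ, Multiset.count_eq_zero_of_notMem hν]
  · exact Nat.eq_of_mul_eq_mul_left hn (hμν n)

theorem mul_count_singleton (k n : ℕ) :
    n * ({k} : Multiset ℕ).count n = (Multiset.replicate k k).count n := by
  rw [Multiset.count_singleton, Multiset.count_replicate]
  grind

theorem card_le_card_erase_add_one [DecidableEq α] (μ : Multiset α) (a : α) :
    μ.card ≤ (μ.erase a).card + 1 := by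
  rw [← Multiset.card_cons a]
  exact Multiset.card_le_card (Multiset.le_cons_erase μ a)

theorem erase_add_pair_eq_iff {μ : Multiset ℕ} {i j k l : ℕ} (hi : 0 < i) (hj : 0 < j)
    (hkl : k + l ∈ μ) :
    μ.erase (i + j) + {i, j} = μ.erase (k + l) + {k, l} ↔ ({i, j} : Multiset ℕ) = {k, l} := by
  constructor
  · intro heq
    have hij : i + j ∈ μ := by
      by_contra hij
      have hcard := congrArg Multiset.card heq
      rw [Multiset.erase_of_notMem hij, Multiset.card_add, Multiset.card_add,
        Multiset.card_pair, Multiset.card_pair, ← Multiset.card_erase_add_one hkl] at hcard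
      lia
    have hpairs : ({i, j} : Multiset ℕ) + {k + l} = {k, l} + {i + j} := by
      apply add_left_cancel (a := μ.erase (i + j) + μ.erase (k + l))
      calc μ.erase (i + j) + μ.erase (k + l) + ({i, j} + {k + l})
          = (μ.erase (i + j) + {i, j}) + (μ.erase (k + l) + {k + l}) := by abel
        _ = (μ.erase (k + l) + {k, l}) + (μ.erase (i + j) + {i + j}) := by
          simp only [heq, add_comm _ {_}, Multiset.singleton_add, Multiset.cons_erase hij,
            Multiset.cons_erase hkl]
        _ = μ.erase (i + j) + μ.erase (k + l) + ({k, l} + {i + j}) := by abel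
    have hsum : i + j = k + l := by
      have hmem : i + j ∈ ({i, j} : Multiset ℕ) + {k + l} := by rw [hpairs]; simp
      simp only [Multiset.insert_eq_cons, Multiset.mem_add, Multiset.mem_cons,
        Multiset.mem_singleton] at hmem
      lia
    rw [hsum] at hpairs
    exact add_right_cancel hpairs
  · intro heq
    have hsum : i + j = k + l := by simpa using congrArg Multiset.sum heq
    rw [heq, hsum]

theorem pair_eq_pair_iff {i j k l : α} :
    ({i, j} : Multiset α) = {k, l} ↔ i = k ∧ j = l ∨ i = l ∧ j = k := by
  simp only [Multiset.insert_eq_cons, Multiset.cons_eq_cons, Multiset.singleton_inj,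
    Multiset.singleton_eq_cons_iff]
  grind

end Multiset

section Perm

variable {X : Type*}

theorem sameCycle_iterate (h : Perm X) (x : X) (n : ℕ) : h.SameCycle x (h^[n] x) := by
  rw [Perm.iterate_eq_pow, Perm.sameCycle_pow_right]

theorem minimalPeriod_eq_card_of_isCycleOn {h : Perm X} {c : Finset X} (hc : h.IsCycleOn c)
    {x : X} (hx : x ∈ c) : minimalPeriod h x = #c := by
  apply Nat.dvd_antisymm
  · apply IsPeriodicPt.minimalPeriod_dvd
    rw [IsPeriodicPt, IsFixedPt, Perm.iterate_eq_pow, hc.pow_apply_eq hx]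
  · rw [← hc.pow_apply_eq hx, ← Perm.iterate_eq_pow]
    exact Function.iterate_minimalPeriod

theorem minimalPeriod_pos [Finite X] (h : Perm X) (x : X) : 0 < minimalPeriod h x :=
  Function.minimalPeriod_pos_of_mem_periodicPts (h.injective.mem_periodicPts x)

theorem minimalPeriod_iterate [Finite X] (h : Perm X) (x : X) (n : ℕ) :
    minimalPeriod h (h^[n] x) = minimalPeriod h x :=
  Function.minimalPeriod_apply_iterate (h.injective.mem_periodicPts x) n

theorem iterate_ne_self {f : X → X} {x : X} {n : ℕ} (hn : 0 < n) (hnx : n < minimalPeriod f x) :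
    f^[n] x ≠ x := fun hfix =>
  (IsPeriodicPt.minimalPeriod_le hn hfix).not_gt hnx

theorem iterate_ne_self_and_ne_iterate {f : X → X} {x : X} {a k : ℕ} (hk : k < minimalPeriod f x)
    (ha : 0 < a) (hak : a < k) : f^[a] x ≠ x ∧ f^[a] x ≠ f^[k] x :=
  ⟨iterate_ne_self ha (hak.trans hk), fun heq =>
    hak.ne ((Function.iterate_eq_iterate_iff_of_lt_minimalPeriod (hak.trans hk) hk).1 heq)⟩

theorem exists_iterate_eq_of_sameCycle [Finite X] {h : Perm X} {s t : X} (hst : s ≠ t)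
    (hcyc : h.SameCycle s t) : ∃ k, 0 < k ∧ k < minimalPeriod h s ∧ h^[k] s = t := by
  obtain ⟨n, hn⟩ := hcyc.exists_nat_pow_eq
  have hmod : h^[n % minimalPeriod h s] s = t := by
    rw [Function.iterate_mod_minimalPeriod_eq, Perm.iterate_eq_pow, hn]
  refine ⟨n % minimalPeriod h s, Nat.pos_of_ne_zero fun h0 => hst ?_,
    Nat.mod_lt _ (minimalPeriod_pos h s), hmod⟩
  rwa [h0] at hmod

theorem swap_eq_swap_iff_of_ne [DecidableEq X] {x y s t : X} (hxy : x ≠ y) :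
    swap x y = swap s t ↔ x = s ∧ y = t ∨ x = t ∧ y = s := by
  constructor
  · intro heq
    have hx : swap s t x = y := by rw [← heq, swap_apply_left]
    rw [swap_apply_def] at hx
    grind
  · rintro (⟨rfl, rfl⟩ | ⟨rfl, rfl⟩)
    · rfl
    · exact swap_comm x y

end Perm

section Cut

variable {X : Type*} [DecidableEq X] {h : Perm X} {s t x : X} {k : ℕ}

theorem iterate_swap_mul_of_forall_ne
    (hne : ∀ a, 0 < a → a ≤ k → h^[a] x ≠ s ∧ h^[a] x ≠ t) :
    (swap s t * h)^[k] x = h^[k] x := by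
  induction k with
  | zero => rfl
  | succ k ih =>
    rw [Function.iterate_succ_apply', ih fun a ha hak => hne a ha (by lia), Perm.mul_apply,
      ← Function.iterate_succ_apply' h]
    obtain ⟨hs, ht⟩ := hne (k + 1) k.succ_pos le_rfl
    exact swap_apply_of_ne_of_ne hs ht

theorem iterate_swap_mul_of_forall_lt_ne (hk : 0 < k)
    (hne : ∀ a, 0 < a → a < k → h^[a] x ≠ s ∧ h^[a] x ≠ t) :
    (swap s t * h)^[k] x = swap s t (h^[k] x) := by
  obtain ⟨k, rfl⟩ := Nat.exists_eq_succ_of_ne_zero hk.ne'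
  rw [Function.iterate_succ_apply', Function.iterate_succ_apply',
    iterate_swap_mul_of_forall_ne fun a ha hak => hne a ha (by lia), Perm.mul_apply]

theorem minimalPeriod_swap_mul_of_not_sameCycle (hs : ¬h.SameCycle s x) (ht : ¬h.SameCycle t x) :
    minimalPeriod (swap s t * h) x = minimalPeriod h x := by
  have hiter (n : ℕ) : (swap s t * h)^[n] x = h^[n] x :=
    iterate_swap_mul_of_forall_ne fun a _ _ =>
      ⟨fun hx => hs (hx ▸ sameCycle_iterate h x a).symm,
        fun hx => ht (hx ▸ sameCycle_iterate h x a).symm⟩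
  rw [Function.minimalPeriod_eq_minimalPeriod_iff]
  intro n
  rw [IsPeriodicPt, IsPeriodicPt, IsFixedPt, IsFixedPt, hiter]

theorem iterate_swap_mul_of_lt (hk : k < minimalPeriod h s) {a : ℕ} (ha : a < k) :
    (swap s (h^[k] s) * h)^[a] s = h^[a] s :=
  iterate_swap_mul_of_forall_ne fun _ hb hba =>
    iterate_ne_self_and_ne_iterate hk hb (hba.trans_lt ha)

theorem minimalPeriod_swap_mul_self (hk0 : 0 < k) (hk : k < minimalPeriod h s) :
    minimalPeriod (swap s (h^[k] s) * h) s = k := by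
  have hper : IsPeriodicPt (swap s (h^[k] s) * h) k s := by
    rw [IsPeriodicPt, IsFixedPt, iterate_swap_mul_of_forall_lt_ne hk0 fun _ =>
      iterate_ne_self_and_ne_iterate hk, swap_apply_right]
  refine (hper.minimalPeriod_le hk0).antisymm (not_lt.1 fun hlt => ?_)
  apply iterate_ne_self (hper.minimalPeriod_pos hk0) (hlt.trans hk)
  rw [← iterate_swap_mul_of_lt hk hlt, Function.iterate_minimalPeriod]

theorem minimalPeriod_swap_mul_iterate (hk : k < minimalPeriod h s) {a : ℕ} (ha : a < k) :
    minimalPeriod (swap s (h^[k] s) * h) (h^[a] s) = k := by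
  have hself := minimalPeriod_swap_mul_self (a.zero_le.trans_lt ha) hk
  rw [← iterate_swap_mul_of_lt hk ha, Function.minimalPeriod_apply_iterate, hself]
  exact Function.minimalPeriod_pos_iff_mem_periodicPts.1 (by lia)

-- With `n` the period of `s`, swapping `s` and `h^[k] s` also cuts `n - k` steps off the cycle of
-- `h^[k] s`, because `h^[n - k] (h^[k] s) = s`.
theorem minimalPeriod_swap_mul_iterate_add (hk0 : 0 < k) (hk : k < minimalPeriod h s) {a : ℕ}
    (ha : a < minimalPeriod h s - k) :
    minimalPeriod (swap s (h^[k] s) * h) (h^[k + a] s) = minimalPeriod h s - k := by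
  have hperiod : minimalPeriod h (h^[k] s) = minimalPeriod h s :=
    Function.minimalPeriod_apply_iterate
      (Function.minimalPeriod_pos_iff_mem_periodicPts.1 (by lia)) k
  have hback : h^[minimalPeriod h s - k] (h^[k] s) = s := by
    rw [← Function.iterate_add_apply, Nat.sub_add_cancel hk.le, Function.iterate_minimalPeriod]
  have hcut := minimalPeriod_swap_mul_iterate (h := h) (s := h^[k] s)
    (k := minimalPeriod h s - k) (by lia) ha
  rwa [hback, swap_comm, ← Function.iterate_add_apply, add_comm a k] at hcut

theorem swap_iterate_eq_swap_iterate_iff {i j : ℕ} (hi : 0 < i) (hj : 0 < j)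
    (hs : minimalPeriod h s = i + j) (ht : minimalPeriod h t = i + j) :
    swap t (h^[i] t) = swap s (h^[i] s) ↔ t = s ∨ i = j ∧ t = h^[i] s := by
  have hperiod : minimalPeriod h (h^[i] s) = i + j := by
    rw [← hs]
    exact Function.minimalPeriod_apply_iterate
      (Function.minimalPeriod_pos_iff_mem_periodicPts.1 (by lia)) i
  have hback : h^[j] (h^[i] s) = s := by
    rw [← Function.iterate_add_apply, add_comm, ← hs, Function.iterate_minimalPeriod]
  have hinvol : h^[i] (h^[i] s) = s ↔ i = j := by
    conv_lhs => rhs; rw [← hback]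
    exact Function.iterate_eq_iterate_iff_of_lt_minimalPeriod (by lia) (by lia)
  rw [swap_eq_swap_iff_of_ne (iterate_ne_self hi (by lia)).symm]
  grind

theorem sameCycle_swap_mul_of_not_sameCycle [Finite X] (hst : ¬h.SameCycle s t) :
    (swap s t * h).SameCycle s t := by
  have hne (a : ℕ) : h^[a] s ≠ t := fun heq =>
    hst (heq ▸ sameCycle_iterate h s a)
  have hreach : (swap s t * h)^[minimalPeriod h s] s = t := by
    rw [iterate_swap_mul_of_forall_lt_ne (minimalPeriod_pos h s) fun a ha hak =>
      ⟨iterate_ne_self ha hak, hne a⟩, Function.iterate_minimalPeriod, swap_apply_left]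
  have hcyc := sameCycle_iterate (swap s t * h) s (minimalPeriod h s)
  rwa [hreach] at hcyc

end Cut

section CycleType

variable {X : Type*} [Fintype X] [DecidableEq X]

theorem pos_of_mem_cycleTypeFull {h : Perm X} {n : ℕ} (hn : n ∈ cycleTypeFull h) : 0 < n := by
  obtain hn | hn := Multiset.mem_add.1 hn
  · exact zero_lt_one.trans (Perm.one_lt_of_mem_cycleType hn)
  · exact (Multiset.eq_of_mem_replicate hn).symm ▸ zero_lt_one

theorem mul_count_cycleType (h : Perm X) {n : ℕ} (hn : 1 < n) :
    n * h.cycleType.count n = #{x | minimalPeriod h x = n} := by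
  have hunion : ({x | minimalPeriod h x = n} : Finset X)
      = {c ∈ h.cycleFactorsFinset | #c.support = n}.biUnion Perm.support := by
    ext x
    have hperiod {c : Perm X} (hc : c ∈ h.cycleFactorsFinset) (hx : x ∈ c.support) :
        minimalPeriod h x = #c.support :=
      minimalPeriod_eq_card_of_isCycleOn (Perm.isCycleOn_support_of_mem_cycleFactorsFinset hc) hx
    simp only [mem_biUnion, mem_filter, mem_univ, true_and]
    constructor
    · rintro rfl
      have hx : x ∈ h.support := by
        rw [Perm.mem_support]
        exact iterate_ne_self zero_lt_one hn
      obtain ⟨c, hc, hxc⟩ := Perm.mem_support_iff_mem_support_of_mem_cycleFactorsFinset.1 hx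
      exact ⟨c, ⟨hc, (hperiod hc hxc).symm⟩, hxc⟩
    · rintro ⟨c, ⟨hc, rfl⟩, hxc⟩
      exact hperiod hc hxc
  have hdisjoint : Set.PairwiseDisjoint
      ({c ∈ h.cycleFactorsFinset | #c.support = n} : Finset (Perm X)) Perm.support :=
    fun c hc d hd hcd => (h.cycleFactorsFinset_pairwise_disjoint (mem_filter.1 hc).1
      (mem_filter.1 hd).1 hcd).disjoint_support
  rw [hunion, card_biUnion hdisjoint, sum_const_nat fun c hc => (mem_filter.1 hc).2, mul_comm,
    Perm.cycleType_def, Multiset.count_map]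
  simp only [Function.comp_apply, eq_comm (a := n)]
  rfl

theorem mul_count_cycleTypeFull (h : Perm X) (n : ℕ) :
    n * (cycleTypeFull h).count n = #{x | minimalPeriod h x = n} := by
  rw [cycleTypeFull, Multiset.count_add, Multiset.count_replicate]
  obtain rfl | rfl | hn : n = 0 ∨ n = 1 ∨ 1 < n := by lia
  · simp [(minimalPeriod_pos h _).ne']
  · have hcount : h.cycleType.count 1 = 0 :=
      Multiset.count_eq_zero.2 fun hmem => (Perm.one_lt_of_mem_cycleType hmem).false
    simp only [hcount, Function.minimalPeriod_eq_one_iff_isFixedPt, IsFixedPt, if_true, zero_add,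
      one_mul]
  · rw [if_neg hn.ne, add_zero, mul_count_cycleType h hn]

theorem count_map_minimalPeriod (h : Perm X) (n : ℕ) :
    (univ.val.map (minimalPeriod h)).count n = n * (cycleTypeFull h).count n := by
  rw [mul_count_cycleTypeFull, Multiset.count_map]
  simp only [eq_comm (a := n)]
  rfl

theorem minimalPeriod_mem_cycleTypeFull (h : Perm X) (s : X) :
    minimalPeriod h s ∈ cycleTypeFull h := by
  have hpos : 0 < minimalPeriod h s * (cycleTypeFull h).count (minimalPeriod h s) := by
    rw [mul_count_cycleTypeFull]
    exact card_pos.2 ⟨s, by rw [mem_filter_univ]⟩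
  exact Multiset.count_pos.1 (Nat.pos_of_mul_pos_left hpos)

theorem filter_sameCycle_val (h : Perm X) (s : X) :
    univ.val.filter (h.SameCycle s) = (Multiset.range (minimalPeriod h s)).map (h^[·] s) := by
  have himage : univ.filter (h.SameCycle s) = (range (minimalPeriod h s)).image (h^[·] s) := by
    ext x
    simp only [mem_filter_univ, mem_image, mem_range]
    constructor
    · intro hx
      obtain ⟨n, rfl⟩ := hx.exists_nat_pow_eq
      exact ⟨n % minimalPeriod h s, Nat.mod_lt _ (minimalPeriod_pos h s), by
        rw [Function.iterate_mod_minimalPeriod_eq, Perm.iterate_eq_pow]⟩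
    · rintro ⟨n, -, rfl⟩
      exact sameCycle_iterate h s _
  have hinj : Set.InjOn (h^[·] s) (range (minimalPeriod h s)) := by
    rw [coe_range]
    exact Function.iterate_injOn_Iio_minimalPeriod
  rw [← filter_val, himage, image_val_of_injOn hinj, range_val]

theorem map_univ_eq_map_cycle_add {β : Type*} (h : Perm X) (s : X) (p : X → β) :
    univ.val.map p = (Multiset.range (minimalPeriod h s)).map (fun a => p (h^[a] s))
      + (univ.val.filter fun x => ¬h.SameCycle s x).map p := by
  have hcycle : (univ.val.filter (h.SameCycle s)).map p
      = (Multiset.range (minimalPeriod h s)).map fun a => p (h^[a] s) := by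
    rw [filter_sameCycle_val, Multiset.map_map]
    rfl
  rw [← hcycle, ← Multiset.map_add, Multiset.filter_add_not]

theorem map_minimalPeriod_swap_mul (h : Perm X) {s : X} {k : ℕ} (hk0 : 0 < k)
    (hk : k < minimalPeriod h s) :
    univ.val.map (minimalPeriod (swap s (h^[k] s) * h))
        + .replicate (minimalPeriod h s) (minimalPeriod h s)
      = univ.val.map (minimalPeriod h) + (.replicate k k
        + .replicate (minimalPeriod h s - k) (minimalPeriod h s - k)) := by
  have hoff : (univ.val.filter fun x => ¬h.SameCycle s x).map
        (minimalPeriod (swap s (h^[k] s) * h))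
      = (univ.val.filter fun x => ¬h.SameCycle s x).map (minimalPeriod h) := by
    refine Multiset.map_congr rfl fun x hx => ?_
    have hsx := (Multiset.mem_filter.1 hx).2
    exact minimalPeriod_swap_mul_of_not_sameCycle hsx fun htx =>
      hsx ((sameCycle_iterate h s k).trans htx)
  have hcycle : (Multiset.range (minimalPeriod h s)).map
        (fun a => minimalPeriod (swap s (h^[k] s) * h) (h^[a] s))
      = .replicate k k + .replicate (minimalPeriod h s - k) (minimalPeriod h s - k) := by
    conv_lhs => rw [← Nat.add_sub_cancel' hk.le]
    rw [Multiset.range_add, Multiset.map_add, Multiset.map_map, Function.comp_def]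
    congr 1
    · rw [Multiset.map_congr rfl fun a ha =>
        minimalPeriod_swap_mul_iterate hk (Multiset.mem_range.1 ha), Multiset.map_const',
        Multiset.card_range]
    · rw [Multiset.map_congr rfl fun a ha =>
        minimalPeriod_swap_mul_iterate_add hk0 hk (Multiset.mem_range.1 ha), Multiset.map_const',
        Multiset.card_range]
  rw [map_univ_eq_map_cycle_add h s, hoff, hcycle, map_univ_eq_map_cycle_add h s (minimalPeriod h)]
  simp only [minimalPeriod_iterate, Multiset.map_const', Multiset.card_range]
  abel

theorem cycleTypeFull_swap_mul_add (h : Perm X) {s : X} {k : ℕ} (hk0 : 0 < k)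
    (hk : k < minimalPeriod h s) :
    cycleTypeFull (swap s (h^[k] s) * h) + {minimalPeriod h s}
      = cycleTypeFull h + {k, minimalPeriod h s - k} := by
  apply eq_of_forall_mul_count_eq
  · simp only [Multiset.mem_add, Multiset.mem_singleton]
    rintro (hmem | hzero)
    · exact (pos_of_mem_cycleTypeFull hmem).false
    · lia
  · simp only [Multiset.insert_eq_cons, Multiset.mem_add, Multiset.mem_cons,
      Multiset.mem_singleton]
    rintro (hmem | hzero | hzero)
    · exact (pos_of_mem_cycleTypeFull hmem).false
    · lia
    · lia
  · intro n
    rw [Multiset.insert_eq_cons, ← Multiset.singleton_add]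
    simp only [Multiset.count_add, mul_add, mul_count_singleton, ← count_map_minimalPeriod]
    simp only [← Multiset.count_add, map_minimalPeriod_swap_mul h hk0 hk]

theorem cycleTypeFull_swap_mul (h : Perm X) {s : X} {k : ℕ} (hk0 : 0 < k)
    (hk : k < minimalPeriod h s) :
    cycleTypeFull (swap s (h^[k] s) * h)
      = (cycleTypeFull h).erase (minimalPeriod h s) + {k, minimalPeriod h s - k} := by
  apply add_right_cancel (b := {minimalPeriod h s})
  rw [cycleTypeFull_swap_mul_add h hk0 hk, add_right_comm, add_comm (Multiset.erase _ _),
    Multiset.singleton_add, Multiset.cons_erase (minimalPeriod_mem_cycleTypeFull h s)]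

theorem card_cycleTypeFull_swap_mul_add_one {h : Perm X} {s t : X} (hst : ¬h.SameCycle s t) :
    (cycleTypeFull (swap s t * h)).card + 1 = (cycleTypeFull h).card := by
  have hne : s ≠ t := fun heq => hst (heq ▸ .refl h s)
  obtain ⟨k, hk0, hk, hkt⟩ :=
    exists_iterate_eq_of_sameCycle hne (sameCycle_swap_mul_of_not_sameCycle hst)
  have hcard := congrArg Multiset.card (cycleTypeFull_swap_mul_add _ hk0 hk)
  rw [hkt, swap_mul_self_mul, Multiset.card_add, Multiset.card_add, Multiset.card_singleton,
    Multiset.card_pair] at hcard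
  lia

end CycleType

section Count

variable {X : Type*} [Fintype X] [DecidableEq X] {h : Perm X} {s t : X} {i j : ℕ}

theorem sameCycle_of_cycleTypeFull_swap_mul_eq
    (hcut : cycleTypeFull (swap s t * h) = (cycleTypeFull h).erase (i + j) + {i, j}) :
    h.SameCycle s t := by
  by_contra hst
  have hjoin := card_cycleTypeFull_swap_mul_add_one hst
  have herase := card_le_card_erase_add_one (cycleTypeFull h) (i + j)
  rw [hcut, Multiset.card_add, Multiset.card_pair] at hjoin
  lia

theorem cycleTypeFull_swap_mul_eq_iff {k : ℕ} (hi : 0 < i) (hj : 0 < j) (hk0 : 0 < k)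
    (hk : k < minimalPeriod h s) :
    cycleTypeFull (swap s (h^[k] s) * h) = (cycleTypeFull h).erase (i + j) + {i, j}
      ↔ minimalPeriod h s = i + j ∧ (k = i ∨ k = j) := by
  have hsum : k + (minimalPeriod h s - k) = minimalPeriod h s := Nat.add_sub_cancel' hk.le
  have hpair := erase_add_pair_eq_iff (μ := cycleTypeFull h) hi hj
    (hsum.symm ▸ minimalPeriod_mem_cycleTypeFull h s)
  rw [hsum] at hpair
  rw [cycleTypeFull_swap_mul h hk0 hk, eq_comm, hpair, pair_eq_pair_iff]
  lia

theorem isSwap_and_cycleTypeFull_mul_eq_iff (hi : 0 < i) (hj : 0 < j) {τ : Perm X} :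
    τ.IsSwap ∧ cycleTypeFull (τ * h) = (cycleTypeFull h).erase (i + j) + {i, j}
      ↔ ∃ s, minimalPeriod h s = i + j ∧ swap s (h^[i] s) = τ := by
  constructor
  · rintro ⟨⟨s, t, hst, rfl⟩, hcut⟩
    obtain ⟨k, hk0, hk, rfl⟩ :=
      exists_iterate_eq_of_sameCycle hst (sameCycle_of_cycleTypeFull_swap_mul_eq hcut)
    obtain ⟨hs, rfl | rfl⟩ := (cycleTypeFull_swap_mul_eq_iff hi hj hk0 hk).1 hcut
    · exact ⟨s, hs, rfl⟩
    · refine ⟨h^[k] s, (minimalPeriod_iterate h s k).trans hs, ?_⟩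
      rw [← Function.iterate_add_apply, ← hs, Function.iterate_minimalPeriod, swap_comm]
  · rintro ⟨s, hs, rfl⟩
    have his : i < minimalPeriod h s := by lia
    exact ⟨⟨s, h^[i] s, (iterate_ne_self hi his).symm, rfl⟩,
      (cycleTypeFull_swap_mul_eq_iff hi hj hi his).2 ⟨hs, .inl rfl⟩⟩

theorem card_filter_swap_iterate_eq (hi : 0 < i) (hj : 0 < j) (hs : minimalPeriod h s = i + j) :
    #{t ∈ {t | minimalPeriod h t = i + j} | swap t (h^[i] t) = swap s (h^[i] s)}
      = if i = j then 2 else 1 := by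
  have hfiber : ({t ∈ {t | minimalPeriod h t = i + j} | swap t (h^[i] t) = swap s (h^[i] s)} :
      Finset X)
      = if i = j then {s, h^[i] s} else {s} := by
    ext t
    have hsi : minimalPeriod h (h^[i] s) = i + j := (minimalPeriod_iterate h s i).trans hs
    have hiff := swap_iterate_eq_swap_iterate_iff hi hj hs (t := t)
    split_ifs <;> simp only [mem_filter, mem_univ, true_and, mem_insert, mem_singleton] <;> grind
  rw [hfiber, apply_ite card, card_pair (iterate_ne_self hi (by lia)).symm, card_singleton]

end Count

theorem count_cut_transpositions_ne_general
    {X : Type*} [Fintype X] [DecidableEq X] (h : Perm X) (i j : ℕ) (hi : 0 < i) (hj : 0 < j) :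
    (if i = j then 2 else 1) * Set.ncard {τ : Perm X | τ.IsSwap ∧
        cycleTypeFull (τ * h) = (cycleTypeFull h).erase (i + j) + {i, j}}
      = (i + j) * (cycleTypeFull h).count (i + j) := by
  have himage : {τ : Perm X | τ.IsSwap ∧
      cycleTypeFull (τ * h) = (cycleTypeFull h).erase (i + j) + {i, j}}
        = ((univ.filter (minimalPeriod h · = i + j)).image fun s => swap s (h^[i] s)) := by
    ext τ
    simpa using isSwap_and_cycleTypeFull_mul_eq_iff hi hj
  rw [himage, Set.ncard_coe_finset, mul_count_cycleTypeFull, mul_comm,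
    card_eq_sum_card_image (fun s => swap s (h^[i] s))]
  refine (sum_const_nat fun τ hτ => ?_).symm
  obtain ⟨s, hs, rfl⟩ := mem_image.1 hτ
  exact card_filter_swap_iterate_eq hi hj ((mem_filter_univ s).1 hs)

/-- for a permutation `h` with cycle type `μ` (including fixed points) and
positive integers `i < j`, the number of transpositions `τ` such that the cycle type of
`τ ∘ h` is `μ` with one part `i + j` removed and two parts `i` and `j` added is exactly
`(i + j) · m_{i+j}(μ)`. -/
theorem count_cut_transpositions_ne
    {X : Type*} [Fintype X] [DecidableEq X] (h : Equiv.Perm X) (i j : ℕ)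
    (hi : 0 < i) (hij : i < j) :
    Set.ncard {τ : Equiv.Perm X | τ.IsSwap ∧
        cycleTypeFull (τ * h)
          = (cycleTypeFull h).erase (i + j) + {i, j}}
      = (i + j) * (cycleTypeFull h).count (i + j) := by
  simpa only [if_neg hij.ne, one_mul] using
    count_cut_transpositions_ne_general h i j hi (hi.trans hij)
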